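/- Let n, r be integers with r ≥ 3, n ≥ 2 and 2r ≥ n, and let Σ ⊂ ℙ²(ℂ) be a finite set such that 4·|Σ| ≤ (2r+n−2)·r and such that, for every integer t ≥ 1 and every nonzero homogeneous polynomial C of degree t in ℂ[x_0,x_1,x_2], at most t(2r+n−2) points of Σ lie on the plane curve {C = 0}. Then for every point P ∈ Σ there exists a homogeneous polynomial of degree 3r+n−5 in ℂ[x_0,x_1,x_2] that vanishes at every point of Σ \ {P} and does not vanish at P. -/

import Mathlib

open MvPolynomial

noncomputable section

/-- The projective space `ℙ^N(ℂ)`. -/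
abbrev ProjPt (N : ℕ) := Projectivization ℂ (Fin (N + 1) → ℂ)

/-- A (homogeneous) polynomial vanishes at a point of projective space. -/
def VanishesAt {N : ℕ} (F : MvPolynomial (Fin (N + 1)) ℂ) (p : ProjPt N) : Prop :=
  eval p.rep F = 0

/-!
Put `m = 3r + n - 5` and suppose that no form of degree `m` separates `P` from the rest of `Σ`. By
linear duality there are weights `μ` on `Σ`, with `μ P ≠ 0`, such that `∑ μ q F(q) = 0` for all
forms `F` of degree `m`. Let `Γ` be the support of `μ` and `s` the least degree of a curve through
`Γ`.

If `r ≤ s`, the forms of degree `r - 1` embed into the functions on `Γ`, where they are orthogonal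
to themselves for the nondegenerate pairing `(φ, ψ) ↦ ∑ μ q φ(q) ψ(q)`. Hence `|Γ|` is at least
twice their number, `r (r + 1)`, which is too many.

If `s < r`, let `C` be a curve of degree `s` through `Γ`, in affine coordinates in which `Γ` is at
finite distance and `C` is monic of degree `s` in `Y`. Every curve `G` of degree at most `m + 2 - s`
through `Γ` is a multiple of `C`: if `D` is the gcd, the weights `μ D` form a relation in degree
`m - deg D` on the complete intersection `C/D = G/D = 0`, so they vanish, `D` passes through `Γ`,
and `D = C` by minimality of `s`. So the polynomials of degree less than `s` and those of degree at
most `m + 1 - s` with `Y`-degree less than `s` embed into the functions on `Γ`. They are orthogonal,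
and counting them gives `|Γ| ≥ s (m + 3 - s)`, more points than a curve of degree `s` may contain.

A complete intersection `C = G = 0` of type `(a, b)` carries no nonzero relation in degree
`m ≥ a + b - 2`: choose a line `X = c` on which `C` and `G` are coprime. Every polynomial of degree
at most `m + 1` is `u C + v G + (X - c) g` with `deg g ≤ m`, so dividing the weights by `x - c`
gives a relation in degree `m + 1`. Iterating, a polynomial separating one point from the others
eventually falls within the degree and kills its weight.
-/

section TotalDegree

open scoped Polynomial
open Polynomial.Bivariate

variable {R : Type*} [CommRing R]

/-- The total degree of a polynomial in `R[X][Y]`, with `0` of total degree `0`. -/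
def totalDeg (f : R[X][Y]) : ℕ :=
  (equivMvPolynomial R f).totalDegree

lemma coeff_equivMvPolynomial (f : R[X][Y]) (d : Fin 2 →₀ ℕ) :
    coeff d (equivMvPolynomial R f) = (f.coeff (d 1)).coeff (d 0) := by
  induction f using Polynomial.induction_on' with
  | add p q hp hq => simp only [map_add, coeff_add, Polynomial.coeff_add, hp, hq]
  | monomial j p =>
    induction p using Polynomial.induction_on' with
    | add p q hp hq => simp only [map_add, coeff_add, Polynomial.coeff_add, hp, hq]
    | monomial i c =>
      have hmon : equivMvPolynomial R (.monomial j (.monomial i c)) =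
          monomial (Finsupp.single 0 i + Finsupp.single 1 j) c := by
        simp only [← Polynomial.C_mul_X_pow_eq_monomial, map_mul, map_pow,
          equivMvPolynomial_C_C, equivMvPolynomial_C_X, equivMvPolynomial_X]
        rw [monomial_add_single, ← C_mul_X_pow_eq_monomial]
      have hd : Finsupp.single 0 i + Finsupp.single 1 j = d ↔ i = d 0 ∧ j = d 1 := by
        simp [Finsupp.ext_iff, Fin.forall_fin_two]
      rw [hmon, coeff_monomial, Polynomial.coeff_monomial]
      split_ifs <;> simp_all [Polynomial.coeff_monomial]

lemma totalDeg_le_iff {f : R[X][Y]} {n : ℕ} :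
    totalDeg f ≤ n ↔ ∀ i j, n < i + j → (f.coeff j).coeff i = 0 := by
  have hdeg (d : Fin 2 →₀ ℕ) : (d.sum fun _ e => e) = d 0 + d 1 := by
    simp [Finsupp.sum_fintype, Fin.sum_univ_two]
  simp only [totalDeg, MvPolynomial.totalDegree, Finset.sup_le_iff, mem_support_iff,
    coeff_equivMvPolynomial, hdeg]
  constructor
  · intro h i j hij
    by_contra hne
    have := h (Finsupp.equivFunOnFinite.symm ![i, j]) (by simpa using hne)
    simp only [Finsupp.equivFunOnFinite_symm_apply_apply, Matrix.cons_val_zero,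
      Matrix.cons_val_one] at this
    omega
  · intro h d hne
    by_contra! hlt
    exact hne (h _ _ hlt)

lemma totalDeg_mul_le (f g : R[X][Y]) : totalDeg (f * g) ≤ totalDeg f + totalDeg g := by
  simpa only [totalDeg, map_mul] using totalDegree_mul _ _

lemma totalDeg_mul [IsDomain R] {f g : R[X][Y]} (hf : f ≠ 0) (hg : g ≠ 0) :
    totalDeg (f * g) = totalDeg f + totalDeg g := by
  simpa only [totalDeg, map_mul] using totalDegree_mul_of_isDomain (by simpa) (by simpa)

lemma totalDeg_sub_le (f g : R[X][Y]) : totalDeg (f - g) ≤ max (totalDeg f) (totalDeg g) := by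
  simpa only [totalDeg, map_sub] using totalDegree_sub _ _

lemma totalDeg_map_C_le (u : R[X]) : totalDeg (u.map Polynomial.C) ≤ u.natDegree := by
  refine totalDeg_le_iff.2 fun i j hij => ?_
  rw [Polynomial.coeff_map, Polynomial.coeff_C]
  split_ifs
  · exact Polynomial.coeff_eq_zero_of_natDegree_lt (by omega)
  · rfl

lemma totalDeg_map_C_mul_le {u : R[X]} {f : R[X][Y]} {n : ℕ}
    (h : u ≠ 0 → u.natDegree + totalDeg f ≤ n) : totalDeg (u.map Polynomial.C * f) ≤ n := by
  rcases eq_or_ne u 0 with rfl | hu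
  · simp [totalDeg]
  · exact (totalDeg_mul_le _ _).trans ((Nat.add_le_add_right (totalDeg_map_C_le u) _).trans (h hu))

lemma natDegree_le_totalDeg (f : R[X][Y]) : f.natDegree ≤ totalDeg f :=
  Polynomial.natDegree_le_iff_coeff_eq_zero.2 fun j hj =>
    Polynomial.ext fun i => totalDeg_le_iff.1 le_rfl i j (by omega)

lemma one_le_totalDeg_C_X_sub_C [Nontrivial R] (a : R) :
    1 ≤ totalDeg (.C (Polynomial.X - .C a) : R[X][Y]) := by
  by_contra! h
  simpa [Polynomial.coeff_C] using totalDeg_le_iff.1 (Nat.lt_one_iff.1 h).le 1 0 zero_lt_one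

/-- `totalDeg f ≤ f.natDegree` says that the curve `f = 0` avoids the point at infinity of the
`Y`-axis. -/
lemma totalDeg_le_natDegree_of_mul [IsDomain R] {f g : R[X][Y]} (hf : f ≠ 0) (hg : g ≠ 0)
    (h : totalDeg (f * g) ≤ (f * g).natDegree) :
    totalDeg f ≤ f.natDegree ∧ totalDeg g ≤ g.natDegree := by
  rw [totalDeg_mul hf hg, Polynomial.natDegree_mul hf hg] at h
  have := natDegree_le_totalDeg f
  have := natDegree_le_totalDeg g
  omega

lemma exists_eq_C_X_sub_C_mul [IsDomain R] {f : R[X][Y]} {a : R}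
    (h : f.map (Polynomial.evalRingHom a) = 0) :
    ∃ g, f = .C (Polynomial.X - .C a) * g ∧ totalDeg g ≤ totalDeg f - 1 := by
  obtain ⟨g, rfl⟩ : .C (Polynomial.X - .C a) ∣ f := by
    refine Polynomial.C_dvd_iff_dvd_coeff _ _ |>.2 fun j => Polynomial.dvd_iff_isRoot.2 ?_
    simpa using congrArg (Polynomial.coeff · j) h
  refine ⟨g, rfl, ?_⟩
  rcases eq_or_ne g 0 with rfl | hg
  · simp [totalDeg]
  · rw [totalDeg_mul (Polynomial.C_ne_zero.2 (Polynomial.X_sub_C_ne_zero a)) hg]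
    have := one_le_totalDeg_C_X_sub_C a
    omega

end TotalDegree

section Resultant

open scoped Polynomial

lemma resultant_map_of_monic {R S : Type*} [CommRing R] [CommRing S] [Nontrivial S] (φ : R →+* S)
    {f : R[X]} (hf : f.Monic) (g : R[X]) :
    Polynomial.resultant (f.map φ) (g.map φ) = φ (Polynomial.resultant f g) := by
  obtain ⟨k, hk⟩ := Nat.exists_eq_add_of_le (Polynomial.natDegree_map_le (f := φ) (p := g))
  have hcoeff : (f.map φ).coeff f.natDegree = 1 := by
    rw [← hf.natDegree_map φ, (hf.map φ).coeff_natDegree]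
  rw [← Polynomial.resultant_map_map f g f.natDegree g.natDegree φ, hk,
    Polynomial.resultant_add_right_deg _ _ _ _ _ le_rfl, hcoeff, one_pow, one_mul,
    hf.natDegree_map φ]

/-- A gcd of `C` and `G` over the fraction field of `A` descends to `A[X]` because `C` is monic. -/
lemma exists_common_factor_resultant_ne_zero {A : Type*} [CommRing A] [IsDomain A]
    [IsIntegrallyClosed A] {C : A[X]} (hC : C.Monic) (G : A[X]) :
    ∃ D C' G' : A[X], D.Monic ∧ C'.Monic ∧ C = D * C' ∧ G = D * G' ∧
      Polynomial.resultant C' G' ≠ 0 := by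
  classical
  set L := FractionRing A
  set ψ := algebraMap A L
  have hψ : Function.Injective ψ := IsFractionRing.injective A L
  set d := EuclideanDomain.gcd (C.map ψ) (G.map ψ)
  have hdC : d ∣ C.map ψ := EuclideanDomain.gcd_dvd_left _ _
  have hd : d ≠ 0 := ne_zero_of_dvd_ne_zero (hC.map ψ).ne_zero hdC
  have hlc : d.leadingCoeff ≠ 0 := Polynomial.leadingCoeff_ne_zero.2 hd
  obtain ⟨D, hD⟩ := IsIntegrallyClosed.eq_map_mul_C_of_dvd L hC hdC
  have hDmonic : D.Monic := by
    have hlead := congrArg Polynomial.leadingCoeff hD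
    rw [Polynomial.leadingCoeff_mul, Polynomial.leadingCoeff_C] at hlead
    exact Polynomial.monic_of_injective hψ
      (mul_right_cancel₀ hlc (hlead.trans (one_mul d.leadingCoeff).symm))
  have hDd : Associated (D.map ψ) d :=
    (associated_mul_unit_right (D.map ψ) _ (Polynomial.isUnit_C.2 hlc.isUnit)).trans (.of_eq hD)
  obtain ⟨C', rfl⟩ := (Polynomial.map_dvd_map ψ hψ hDmonic).1 (hDd.dvd.trans hdC)
  obtain ⟨G', rfl⟩ :=
    (Polynomial.map_dvd_map ψ hψ hDmonic).1 (hDd.dvd.trans (EuclideanDomain.gcd_dvd_right _ _))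
  have hC' : C'.Monic := hDmonic.of_mul_monic_left hC
  refine ⟨D, C', G', hDmonic, hC', rfl, rfl, fun h0 => ?_⟩
  have hcop : IsCoprime (C'.map ψ) (G'.map ψ) := by
    obtain ⟨k, hk⟩ := hDd.symm.dvd
    obtain ⟨p, q, hpq⟩ : ∃ p q, d = (D * C').map ψ * p + (D * G').map ψ * q :=
      ⟨_, _, EuclideanDomain.gcd_eq_gcd_ab _ _⟩
    simp only [Polynomial.map_mul] at hpq
    refine ⟨p * k, q * k, mul_left_cancel₀ (hDmonic.map ψ).ne_zero ?_⟩
    linear_combination -hk - k * hpq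
  refine Polynomial.resultant_ne_zero _ _ hcop ?_
  rw [resultant_map_of_monic ψ hC', h0, map_zero]

end Resultant

section CompleteIntersection

open scoped Polynomial
open Polynomial.Bivariate

lemma exists_eq_mul_add_mul_degree_lt {R : Type*} [CommRing R] [Nontrivial R] {c g : R[X]}
    (hc : c.Monic) (h : IsCoprime c g) (f : R[X]) :
    ∃ u v, f = u * c + v * g ∧ v.degree < c.degree := by
  obtain ⟨p, q, hpq⟩ := h
  refine ⟨f * p + (f * q) /ₘ c * g, (f * q) %ₘ c, ?_, Polynomial.degree_modByMonic_lt _ hc⟩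
  linear_combination (-f) * hpq - g * Polynomial.modByMonic_add_div (f * q) c

variable {K : Type*} [Field K]

lemma exists_eq_mul_add_mul_natDegree_add_le {c g : K[X]} (hc : c.Monic) (h : IsCoprime c g)
    {e n : ℕ} (hg : g.natDegree ≤ e) (hn : c.natDegree + e ≤ n + 1) {f : K[X]}
    (hf : f.natDegree ≤ n) :
    ∃ u v, f = u * c + v * g ∧ (u ≠ 0 → u.natDegree + c.natDegree ≤ n) ∧
      (v ≠ 0 → v.natDegree + e ≤ n) := by
  obtain ⟨u, v, huv, hdeg⟩ := exists_eq_mul_add_mul_degree_lt hc h f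
  have hv (hv0 : v ≠ 0) : v.natDegree + e ≤ n := by
    have := Polynomial.natDegree_lt_natDegree hv0 hdeg
    omega
  refine ⟨u, v, huv, fun hu => ?_, hv⟩
  have hvg : (v * g).natDegree ≤ n := by
    rcases eq_or_ne v 0 with rfl | hv0
    · simp
    · exact Polynomial.natDegree_mul_le.trans ((Nat.add_le_add_left hg _).trans (hv hv0))
  rw [← Polynomial.natDegree_mul hu hc.ne_zero, eq_sub_of_add_eq huv.symm]
  exact (Polynomial.natDegree_sub_le _ _).trans (max_le hf hvg)

lemma exists_eq_mul_add_mul_add_line_mul {C G : K[X][Y]} (hC : C.Monic)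
    (hCdeg : totalDeg C ≤ C.natDegree) {a : K}
    (hcop : IsCoprime (C.map (Polynomial.evalRingHom a)) (G.map (Polynomial.evalRingHom a)))
    {n : ℕ} (hn : C.natDegree + totalDeg G ≤ n + 2) {f : K[X][Y]} (hf : totalDeg f ≤ n + 1) :
    ∃ u v g, f = u * C + v * G + .C (Polynomial.X - .C a) * g ∧ totalDeg g ≤ n := by
  set φ := Polynomial.evalRingHom a
  have hid (w : K[X]) : (w.map Polynomial.C).map φ = w := by
    have : φ.comp Polynomial.C = .id K := by ext; simp [φ]
    rw [Polynomial.map_map, this, Polynomial.map_id]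
  have hnat (h : K[X][Y]) : (h.map φ).natDegree ≤ totalDeg h :=
    Polynomial.natDegree_map_le.trans (natDegree_le_totalDeg h)
  have hCφ : (C.map φ).natDegree = C.natDegree := hC.natDegree_map φ
  obtain ⟨u, v, huv, hu, hv⟩ := exists_eq_mul_add_mul_natDegree_add_le (hC.map φ) hcop
    (hnat G) (n := n + 1) (by omega) ((hnat f).trans hf)
  have huC : totalDeg (u.map Polynomial.C * C) ≤ n + 1 :=
    totalDeg_map_C_mul_le fun h0 => (Nat.add_le_add_left (hCdeg.trans hCφ.ge) _).trans (hu h0)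
  have hvG : totalDeg (v.map Polynomial.C * G) ≤ n + 1 := totalDeg_map_C_mul_le hv
  have hline : (f - u.map Polynomial.C * C - v.map Polynomial.C * G).map φ = 0 := by
    simp only [Polynomial.map_sub, Polynomial.map_mul, hid]
    linear_combination huv
  obtain ⟨g, hg, hgdeg⟩ := exists_eq_C_X_sub_C_mul hline
  refine ⟨u.map Polynomial.C, v.map Polynomial.C, g, by linear_combination hg, ?_⟩
  have h₁ := totalDeg_sub_le (f - u.map Polynomial.C * C) (v.map Polynomial.C * G)
  have h₂ := totalDeg_sub_le f (u.map Polynomial.C * C)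
  omega

lemma exists_evalEval_ne_zero_forall_ne {ι : Type*} [Finite ι] {x y : ι → K}
    (hinj : Function.Injective fun q => (x q, y q)) (q : ι) :
    ∃ f : K[X][Y], f.evalEval (x q) (y q) ≠ 0 ∧ ∀ p ≠ q, f.evalEval (x p) (y p) = 0 := by
  classical
  have := Fintype.ofFinite ι
  have hsep (p) : ∃ f : K[X][Y], p ≠ q →
      f.evalEval (x q) (y q) ≠ 0 ∧ f.evalEval (x p) (y p) = 0 := by
    by_cases hx : x p = x q
    · refine ⟨Y - Polynomial.C (Polynomial.C (y p)), fun hpq => ?_⟩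
      have hy : y q ≠ y p := fun hy => hpq (hinj (Prod.ext hx hy.symm))
      simpa [sub_eq_zero] using hy
    · refine ⟨Polynomial.C (Polynomial.X - Polynomial.C (x p)), fun _ => ?_⟩
      simpa [Polynomial.evalEval_C, sub_eq_zero] using Ne.symm hx
  choose F hF using hsep
  refine ⟨∏ p ∈ Finset.univ.erase q, F p, ?_, fun p hp => ?_⟩ <;> rw [Polynomial.evalEval_prod]
  · exact Finset.prod_ne_zero_iff.2 fun p hp => (hF p (Finset.ne_of_mem_erase hp)).1
  · exact Finset.prod_eq_zero (Finset.mem_erase.2 ⟨hp, Finset.mem_univ p⟩) (hF p hp).2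

/-- The point masses `μ q` at the points `(x q, y q)` annihilate all polynomials of total degree at
most `m`. -/
def AffineRelation {ι : Type*} [Fintype ι] (x y μ : ι → K) (m : ℕ) : Prop :=
  ∀ f : K[X][Y], totalDeg f ≤ m → ∑ q, μ q * f.evalEval (x q) (y q) = 0

variable {ι : Type*} [Fintype ι] {x y μ : ι → K} {m : ℕ}

lemma AffineRelation.mul {t : ℕ} (h : AffineRelation x y μ m) {D : K[X][Y]}
    (hD : totalDeg D + t ≤ m) :
    AffineRelation x y (fun q => μ q * D.evalEval (x q) (y q)) t := by
  intro f hf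
  simpa only [Polynomial.evalEval_mul, mul_assoc] using
    h (D * f) ((totalDeg_mul_le D f).trans (by omega))

lemma not_isCoprime_of_evalEval_eq_zero {a b : K} {C G : K[X][Y]} (hC : C.evalEval a b = 0)
    (hG : G.evalEval a b = 0) :
    ¬ IsCoprime (C.map (Polynomial.evalRingHom a)) (G.map (Polynomial.evalRingHom a)) := by
  rintro ⟨u, v, huv⟩
  simpa [Polynomial.map_evalRingHom_eval, hC, hG] using congrArg (Polynomial.eval b) huv

lemma AffineRelation.div_line {C G : K[X][Y]} (h : AffineRelation x y μ m) (hC : C.Monic)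
    (hCdeg : totalDeg C ≤ C.natDegree) {a : K}
    (hcop : IsCoprime (C.map (Polynomial.evalRingHom a)) (G.map (Polynomial.evalRingHom a)))
    (hm : C.natDegree + totalDeg G ≤ m + 2)
    (hC0 : ∀ q, μ q ≠ 0 → C.evalEval (x q) (y q) = 0)
    (hG0 : ∀ q, μ q ≠ 0 → G.evalEval (x q) (y q) = 0) :
    AffineRelation x y (fun q => μ q / (x q - a)) (m + 1) := by
  intro f hf
  obtain ⟨u, v, g, rfl, hg⟩ := exists_eq_mul_add_mul_add_line_mul hC hCdeg hcop hm hf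
  rw [← h g hg]
  refine Finset.sum_congr rfl fun q _ => ?_
  rcases eq_or_ne (μ q) 0 with hq | hq
  · simp [hq]
  have hxa : x q - a ≠ 0 :=
    sub_ne_zero.2 fun hx => not_isCoprime_of_evalEval_eq_zero (hC0 q hq) (hG0 q hq) (hx ▸ hcop)
  simp only [Polynomial.evalEval_add, Polynomial.evalEval_mul, hC0 q hq, hG0 q hq,
    Polynomial.evalEval_C, Polynomial.eval_sub, Polynomial.eval_X, Polynomial.eval_C, mul_zero,
    zero_add]
  field_simp

/-- A complete intersection of type `(s, e)` imposes independent conditions in degree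
`s + e - 2`. -/
theorem AffineRelation.eq_zero_of_resultant_ne_zero [Infinite K] {C G : K[X][Y]}
    (h : AffineRelation x y μ m) (hinj : Function.Injective fun q => (x q, y q)) (hC : C.Monic)
    (hCdeg : totalDeg C ≤ C.natDegree) (hres : Polynomial.resultant C G ≠ 0)
    (hm : C.natDegree + totalDeg G ≤ m + 2)
    (hC0 : ∀ q, μ q ≠ 0 → C.evalEval (x q) (y q) = 0)
    (hG0 : ∀ q, μ q ≠ 0 → G.evalEval (x q) (y q) = 0) : μ = 0 := by
  obtain ⟨a, ha⟩ : ∃ a, (Polynomial.resultant C G).eval a ≠ 0 := by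
    by_contra! h
    exact hres (Polynomial.funext (by simpa using h))
  have hcop : IsCoprime (C.map (Polynomial.evalRingHom a)) (G.map (Polynomial.evalRingHom a)) := by
    rw [← Polynomial.isUnit_resultant_iff_isCoprime (hC.map _), resultant_map_of_monic _ hC]
    exact ha.isUnit
  have hdiv (j : ℕ) : AffineRelation x y (fun q => μ q / (x q - a) ^ j) (m + j) := by
    induction j with
    | zero => simpa using h
    | succ j ih =>
      have := ih.div_line hC hCdeg hcop (by omega) (fun q hq => hC0 q (div_ne_zero_iff.1 hq).1)
        (fun q hq => hG0 q (div_ne_zero_iff.1 hq).1)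
      simpa only [div_div, ← pow_succ, add_assoc] using this
  ext q
  by_contra hq
  have hxa : x q - a ≠ 0 :=
    sub_ne_zero.2 fun hx => not_isCoprime_of_evalEval_eq_zero (hC0 q hq) (hG0 q hq) (hx ▸ hcop)
  obtain ⟨f, hfq, hfp⟩ := exists_evalEval_ne_zero_forall_ne hinj q
  have hsum := hdiv (totalDeg f) f (Nat.le_add_left _ _)
  rw [Finset.sum_eq_single q (fun p _ hp => by rw [hfp p hp, mul_zero]) (by simp)] at hsum
  exact mul_ne_zero (div_ne_zero hq (pow_ne_zero _ hxa)) hfq hsum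

end CompleteIntersection

section Counting

open scoped Polynomial
open Polynomial.Bivariate

variable {K : Type*} [Field K]

lemma finrank_add_finrank_le_card_of_sum_eq_zero {ι : Type*} [Fintype ι] {μ : ι → K}
    (hμ : ∀ i, μ i ≠ 0) {V W : Submodule K (ι → K)}
    (h : ∀ v ∈ V, ∀ w ∈ W, ∑ i, μ i * (v i * w i) = 0) :
    Module.finrank K V + Module.finrank K W ≤ Fintype.card ι := by
  classical
  have hB : (Matrix.toBilin' (Matrix.diagonal μ)).Nondegenerate := by
    rw [LinearMap.BilinForm.nondegenerate_toBilin'_iff_det_ne_zero, Matrix.det_diagonal]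
    exact Finset.prod_ne_zero_iff.2 fun i _ => hμ i
  have hWV : W ≤ (Matrix.toBilin' (Matrix.diagonal μ)).orthogonal V := by
    intro w hw v hv
    change Matrix.toBilin' (Matrix.diagonal μ) v w = 0
    rw [Matrix.toBilin'_apply', ← h v hv w hw]
    simp only [dotProduct, Matrix.mulVec_diagonal]
    exact Finset.sum_congr rfl fun i _ => by ring
  have hle := Submodule.finrank_mono hWV
  rw [LinearMap.BilinForm.finrank_orthogonal hB V, Module.finrank_fintype_fun_eq_card] at hle
  have hV := V.finrank_le
  rw [Module.finrank_fintype_fun_eq_card] at hV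
  omega

variable (K) in
/-- The polynomials in `K[X][Y]` of total degree less than `b` and of degree less than `s` in
`Y`. -/
def trapezoid (s b : ℕ) : Submodule K K[X][Y] where
  carrier := {f | ∀ i j, (f.coeff j).coeff i ≠ 0 → j < s ∧ i + j < b}
  zero_mem' := by simp
  add_mem' {f g} hf hg i j hne := by
    rw [Polynomial.coeff_add, Polynomial.coeff_add] at hne
    by_contra hout
    exact hne (by rw [not_imp_comm.1 (hf i j) hout, not_imp_comm.1 (hg i j) hout, add_zero])
  smul_mem' c f hf i j hne := hf i j fun h => hne (by simp [h])

lemma natDegree_lt_of_mem_trapezoid {s b : ℕ} {f : K[X][Y]} (hf : f ∈ trapezoid K s b)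
    (hne : f ≠ 0) : f.natDegree < s := by
  obtain ⟨i, hi⟩ : ∃ i, f.leadingCoeff.coeff i ≠ 0 := by
    by_contra! h
    exact Polynomial.leadingCoeff_ne_zero.2 hne (Polynomial.ext h)
  exact (hf i _ hi).1

lemma totalDeg_le_of_mem_trapezoid {s b : ℕ} {f : K[X][Y]} (hf : f ∈ trapezoid K s b) :
    totalDeg f ≤ b - 1 :=
  totalDeg_le_iff.2 fun i j hij => not_not.1 fun hne => by
    have := (hf i j hne).2
    omega

lemma sum_le_finrank_map_trapezoid {V : Type*} [AddCommGroup V] [Module K V]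
    [FiniteDimensional K V] {s b : ℕ} {φ : K[X][Y] →ₗ[K] V}
    (hφ : ∀ f ∈ trapezoid K s b, φ f = 0 → f = 0) :
    ∑ j ∈ Finset.range s, (b - j) ≤ Module.finrank K ((trapezoid K s b).map φ) := by
  set monomials := (Polynomial.basisMonomials K).smulTower (Polynomial.basisMonomials K[X])
  set v : (Σ j : Fin s, Fin (b - j)) → K[X][Y] := fun p => monomials (p.2, p.1)
  have hv : LinearIndependent K v := by
    refine monomials.linearIndependent.comp _ ?_
    rintro ⟨j, i⟩ ⟨j', i'⟩ h
    obtain ⟨hi, hj⟩ := Prod.ext_iff.1 h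
    obtain rfl := Fin.ext hj
    obtain rfl := Fin.ext hi
    rfl
  have hspan : Submodule.span K (Set.range v) ≤ trapezoid K s b := by
    rw [Submodule.span_le]
    rintro _ ⟨⟨j, i⟩, rfl⟩ i' j' hne
    have hcoeff : ((v ⟨j, i⟩).coeff j').coeff i' =
        if (j : ℕ) = j' ∧ (i : ℕ) = i' then 1 else 0 := by
      simp only [v, monomials, Module.Basis.smulTower_apply, Polynomial.coe_basisMonomials,
        Polynomial.smul_monomial, smul_eq_mul, mul_one, Polynomial.coeff_monomial, ite_and]
      split_ifs <;> simp_all [Polynomial.coeff_monomial]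
    obtain ⟨rfl, rfl⟩ := of_not_not fun hout => hne (by rw [hcoeff, if_neg hout])
    omega
  have hφv : LinearIndependent K (φ ∘ v) :=
    hv.map (Submodule.disjoint_def.2 fun f hf hf0 => hφ f (hspan hf) hf0)
  calc ∑ j ∈ Finset.range s, (b - j) = Fintype.card (Σ j : Fin s, Fin (b - j)) := by
        simp [Finset.sum_range]
    _ = Module.finrank K (Submodule.span K (Set.range (φ ∘ v))) := (finrank_span_eq_card hφv).symm
    _ ≤ _ := Submodule.finrank_mono (by
        rw [Set.range_comp, Submodule.span_image]; exact Submodule.map_mono hspan)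

lemma sum_range_sub_add_sum_range_sub {s b : ℕ} (h : s ≤ b) :
    ∑ j ∈ Finset.range s, (s - j) + ∑ j ∈ Finset.range s, (b - j) = s * (b + 1) := by
  have hreflect : ∑ j ∈ Finset.range s, (s - j) = ∑ j ∈ Finset.range s, (j + 1) := by
    rw [← Finset.sum_range_reflect]
    exact Finset.sum_congr rfl fun j hj => by have := Finset.mem_range.1 hj; omega
  rw [hreflect, ← Finset.sum_add_distrib, ← smul_eq_mul, ← Finset.card_range s,
    ← Finset.sum_const, Finset.card_range]
  exact Finset.sum_congr rfl fun j hj => by have := Finset.mem_range.1 hj; omega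

variable {ι : Type*} [Fintype ι] {x y μ : ι → K} {m : ℕ}

theorem AffineRelation.mul_le_card (h : AffineRelation x y μ m) (hμ : ∀ q, μ q ≠ 0) {s b : ℕ}
    (hsb : s ≤ b) (hb : s + b ≤ m + 2)
    (hs : ∀ f ∈ trapezoid K s s, (∀ q, f.evalEval (x q) (y q) = 0) → f = 0)
    (hsb' : ∀ f ∈ trapezoid K s b, (∀ q, f.evalEval (x q) (y q) = 0) → f = 0) :
    s * (b + 1) ≤ Fintype.card ι := by
  rcases s.eq_zero_or_pos with rfl | hs0
  · simp
  let φ : K[X][Y] →ₗ[K] (ι → K) :=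
    LinearMap.pi fun q => (Polynomial.aevalAeval (x q) (y q)).toLinearMap
  have hφ (f q) : φ f q = f.evalEval (x q) (y q) :=
    congrFun (Polynomial.coe_aevalAeval_eq_evalEval (x q) (y q)) f
  have horth : ∀ v ∈ (trapezoid K s s).map φ, ∀ w ∈ (trapezoid K s b).map φ,
      ∑ q, μ q * (v q * w q) = 0 := by
    rintro _ ⟨f, hf, rfl⟩ _ ⟨g, hg, rfl⟩
    have hfs := totalDeg_le_of_mem_trapezoid hf
    have hgb := totalDeg_le_of_mem_trapezoid hg
    simpa only [hφ, Polynomial.evalEval_mul] using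
      h (f * g) ((totalDeg_mul_le f g).trans (by omega))
  calc s * (b + 1)
      = ∑ j ∈ Finset.range s, (s - j) + ∑ j ∈ Finset.range s, (b - j) :=
        (sum_range_sub_add_sum_range_sub hsb).symm
    _ ≤ _ := add_le_add
        (sum_le_finrank_map_trapezoid fun f hf h0 => hs f hf fun q => by rw [← hφ, h0]; rfl)
        (sum_le_finrank_map_trapezoid fun f hf h0 => hsb' f hf fun q => by rw [← hφ, h0]; rfl)
    _ ≤ Fintype.card ι := finrank_add_finrank_le_card_of_sum_eq_zero hμ horth

theorem AffineRelation.mul_succ_le_card (h : AffineRelation x y μ m) (hμ : ∀ q, μ q ≠ 0) {r : ℕ}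
    (hr : 2 * r ≤ m + 2)
    (hmin : ∀ f : K[X][Y], totalDeg f < r → (∀ q, f.evalEval (x q) (y q) = 0) → f = 0) :
    r * (r + 1) ≤ Fintype.card ι := by
  rcases r.eq_zero_or_pos with rfl | hr0
  · simp
  have hmin' (f) (hf : f ∈ trapezoid K r r) : (∀ q, f.evalEval (x q) (y q) = 0) → f = 0 :=
    hmin f ((totalDeg_le_of_mem_trapezoid hf).trans_lt (by omega))
  exact h.mul_le_card hμ le_rfl (by omega) hmin' hmin'

theorem AffineRelation.dvd_of_evalEval_eq_zero [Infinite K] (h : AffineRelation x y μ m)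
    (hμ : ∀ q, μ q ≠ 0) (hinj : Function.Injective fun q => (x q, y q)) {C G : K[X][Y]}
    (hC : C.Monic) (hCdeg : totalDeg C ≤ C.natDegree)
    (hmin : ∀ f : K[X][Y], totalDeg f < C.natDegree → (∀ q, f.evalEval (x q) (y q) = 0) → f = 0)
    (hC0 : ∀ q, C.evalEval (x q) (y q) = 0) (hm : C.natDegree + totalDeg G ≤ m + 2)
    (hG0 : ∀ q, G.evalEval (x q) (y q) = 0) : C ∣ G := by
  rcases eq_or_ne G 0 with rfl | hG
  · exact dvd_zero C
  obtain ⟨D, C', G', hD, hC', rfl, rfl, hres⟩ := exists_common_factor_resultant_ne_zero hC G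
  have hG'0 := right_ne_zero_of_mul hG
  obtain ⟨hDdeg, hC'deg⟩ := totalDeg_le_natDegree_of_mul hD.ne_zero hC'.ne_zero hCdeg
  rw [totalDeg_mul hD.ne_zero hG'0, hD.natDegree_mul hC'] at hm
  have hDle := natDegree_le_totalDeg D
  have hC'1 : C'.natDegree = 0 := by
    by_contra hne
    have hDm : totalDeg D + (m - totalDeg D) ≤ m := by omega
    have hμD := (h.mul hDm).eq_zero_of_resultant_ne_zero hinj hC' hC'deg hres (by omega)
      (fun q hq => (mul_eq_zero.1 (Polynomial.evalEval_mul _ _ D C' ▸ hC0 q)).resolve_left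
        (right_ne_zero_of_mul hq))
      (fun q hq => (mul_eq_zero.1 (Polynomial.evalEval_mul _ _ D G' ▸ hG0 q)).resolve_left
        (right_ne_zero_of_mul hq))
    refine hD.ne_zero (hmin D ?_ fun q => ?_)
    · rw [hD.natDegree_mul hC']; omega
    · exact (mul_eq_zero.1 (congrFun hμD q)).resolve_left (hμ q)
  rw [hC'.natDegree_eq_zero.1 hC'1, mul_one]
  exact dvd_mul_right D G'

theorem AffineRelation.mul_sub_le_card [Infinite K] (h : AffineRelation x y μ m)
    (hμ : ∀ q, μ q ≠ 0) (hinj : Function.Injective fun q => (x q, y q)) {C : K[X][Y]}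
    (hC : C.Monic) (hCdeg : totalDeg C ≤ C.natDegree) (hm : 2 * C.natDegree ≤ m + 2)
    (hmin : ∀ f : K[X][Y], totalDeg f < C.natDegree → (∀ q, f.evalEval (x q) (y q) = 0) → f = 0)
    (hC0 : ∀ q, C.evalEval (x q) (y q) = 0) :
    C.natDegree * (m + 3 - C.natDegree) ≤ Fintype.card ι := by
  rcases C.natDegree.eq_zero_or_pos with h0 | hpos
  · simp [h0]
  rw [show m + 3 - C.natDegree = m + 2 - C.natDegree + 1 by omega]
  refine h.mul_le_card hμ (by omega) (by omega)
    (fun f hf => hmin f ((totalDeg_le_of_mem_trapezoid hf).trans_lt (by omega)))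
    fun f hf hf0 => ?_
  have hdeg := totalDeg_le_of_mem_trapezoid hf
  have hdvd := h.dvd_of_evalEval_eq_zero hμ hinj hC hCdeg hmin hC0 (by omega) hf0
  by_contra hne
  have := Polynomial.natDegree_le_of_dvd hdvd hne
  have := natDegree_lt_of_mem_trapezoid hf hne
  omega

end Counting

section Dehomogenization

variable {R : Type*} [CommRing R] {n d : ℕ}

/-- The dehomogenization setting the coordinate `X 0` to `1`. -/
def dehomogenize : MvPolynomial (Fin (n + 1)) R →ₐ[R] MvPolynomial (Fin n) R :=
  aeval (Fin.cons 1 X)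

lemma eval_dehomogenize (x : Fin n → R) (F : MvPolynomial (Fin (n + 1)) R) :
    eval x (dehomogenize F) = eval (Fin.cons 1 x) F := by
  have hhom : (aeval (R := R) x).comp dehomogenize = aeval (Fin.cons 1 x) := by
    ext i
    cases i using Fin.cases <;> simp [dehomogenize]
  simpa only [AlgHom.comp_apply, aeval_eq_eval] using DFunLike.congr_fun hhom F

lemma dehomogenize_monomial (u : Fin (n + 1) →₀ ℕ) (c : R) :
    dehomogenize (monomial u c) = monomial u.tail c := by
  rw [dehomogenize, aeval_monomial, Finsupp.prod_fintype _ _ (by simp), Fin.prod_univ_succ,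
    monomial_eq, Finsupp.prod_fintype _ _ (by simp)]
  simp [algebraMap_eq, Finsupp.tail_apply]

lemma dehomogenize_eq_sum (F : MvPolynomial (Fin (n + 1)) R) :
    dehomogenize F = ∑ u ∈ F.support, monomial u.tail (coeff u F) := by
  conv_lhs => rw [← support_sum_monomial_coeff F]
  simp only [map_sum, dehomogenize_monomial]

lemma degree_cons (k : ℕ) (e : Fin n →₀ ℕ) : (Finsupp.cons k e).degree = k + e.degree :=
  Finsupp.sum_cons n e k

lemma degree_eq_of_mem_support {σ : Type*} {F : MvPolynomial σ R} (hF : F.IsHomogeneous d)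
    {u : σ →₀ ℕ} (hu : u ∈ F.support) : u.degree = d :=
  of_not_not fun h => mem_support_iff.1 hu (hF.coeff_eq_zero h)

lemma totalDegree_dehomogenize_le {F : MvPolynomial (Fin (n + 1)) R} (hF : F.IsHomogeneous d) :
    (dehomogenize F).totalDegree ≤ d := by
  rw [dehomogenize_eq_sum]
  refine totalDegree_finsetSum_le fun u hu => (totalDegree_monomial_le _ _).trans ?_
  change u.tail.degree ≤ d
  rw [← degree_eq_of_mem_support hF hu, ← Finsupp.cons_tail u, degree_cons, Finsupp.tail_cons]
  exact Nat.le_add_left _ _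

lemma coeff_dehomogenize {F : MvPolynomial (Fin (n + 1)) R} (hF : F.IsHomogeneous d)
    (e : Fin n →₀ ℕ) : coeff e (dehomogenize F) = coeff (Finsupp.cons (d - e.degree) e) F := by
  simp only [dehomogenize_eq_sum, coeff_sum, coeff_monomial]
  rw [Finset.sum_eq_single (Finsupp.cons (d - e.degree) e)]
  · rw [if_pos (Finsupp.tail_cons _ _)]
  · intro u hu hne
    refine if_neg fun htail => hne ?_
    rw [← degree_eq_of_mem_support hF hu, ← Finsupp.cons_tail u, htail, degree_cons,
      Nat.add_sub_cancel]
  · intro h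
    rw [notMem_support_iff.1 h, ite_self]

lemma exists_isHomogeneous_dehomogenize_eq {p : MvPolynomial (Fin n) R} (hp : p.totalDegree ≤ d) :
    ∃ F : MvPolynomial (Fin (n + 1)) R, F.IsHomogeneous d ∧ dehomogenize F = p := by
  refine ⟨∑ e ∈ p.support, monomial (Finsupp.cons (d - e.degree) e) (coeff e p),
    .sum _ _ _ fun e he => isHomogeneous_monomial _ ?_, ?_⟩
  · exact (degree_cons _ _).trans (Nat.sub_add_cancel ((le_totalDegree he).trans hp))
  · simp only [map_sum, dehomogenize_monomial, Finsupp.tail_cons, support_sum_monomial_coeff]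

lemma eval_smul_of_isHomogeneous {σ : Type*} {F : MvPolynomial σ R} (hF : F.IsHomogeneous d)
    (c : R) (v : σ → R) : eval (c • v) F = c ^ d * eval v F := by
  rw [eval_eq, eval_eq, Finset.mul_sum]
  refine Finset.sum_congr rfl fun u hu => ?_
  simp only [Pi.smul_apply, smul_eq_mul, mul_pow, Finset.prod_mul_distrib,
    Finset.prod_pow_eq_pow_sum, ← degree_eq_of_mem_support hF hu, Finsupp.degree_apply]
  ring

lemma eval_eq_pow_mul_eval_dehomogenize {K : Type*} [Field K] {F : MvPolynomial (Fin (n + 1)) K}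
    (hF : F.IsHomogeneous d) {v : Fin (n + 1) → K} (hv : v 0 ≠ 0) :
    eval v F = v 0 ^ d * eval (fun i => v i.succ / v 0) (dehomogenize F) := by
  rw [eval_dehomogenize, ← eval_smul_of_isHomogeneous hF]
  congr 2
  ext i
  cases i using Fin.cases <;> simp [mul_div_cancel₀ _ hv]

lemma eval_single_of_isHomogeneous {σ : Type*} [DecidableEq σ] {F : MvPolynomial σ R}
    (hF : F.IsHomogeneous d) (i : σ) :
    eval (Pi.single i 1) F = coeff (Finsupp.single i d) F := by
  rw [eval_eq, Finset.sum_eq_single (Finsupp.single i d)]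
  · rw [Finset.prod_eq_one fun j hj => ?_, mul_one]
    obtain rfl := Finsupp.mem_support_single j i d |>.1 hj |>.1
    rw [Pi.single_eq_same, one_pow]
  · intro u hu hne
    obtain ⟨j, hji, hj⟩ : ∃ j ≠ i, u j ≠ 0 := by
      by_contra! h
      have hsingle : u = Finsupp.single i (u i) := by
        ext j
        rcases eq_or_ne j i with rfl | hj <;> simp [*]
      have hdeg := degree_eq_of_mem_support hF hu
      rw [hsingle, Finsupp.degree_single] at hdeg
      exact hne (hdeg ▸ hsingle)
    rw [Finset.prod_eq_zero (Finsupp.mem_support_iff.2 hj), mul_zero]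
    rw [Pi.single_eq_of_ne hji, zero_pow hj]
  · intro h
    rw [notMem_support_iff.1 h, zero_mul]

end Dehomogenization

section Chart

open scoped Polynomial
open Polynomial.Bivariate

variable {K : Type*} [Field K]

lemma evalEval_eq_eval_equivMvPolynomial (f : K[X][Y]) (a b : K) :
    f.evalEval a b = eval ![a, b] (equivMvPolynomial K f) := by
  have hhom : ((aeval (R := K) ![a, b]).comp (equivMvPolynomial K).toAlgHom) =
      Polynomial.aevalAeval a b := by
    ext <;> simp
  rw [← Polynomial.coe_aevalAeval_eq_evalEval, ← hhom, ← aeval_eq_eval]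
  rfl

lemma eval_eq_pow_mul_evalEval {F : MvPolynomial (Fin 3) K} {d : ℕ} (hF : F.IsHomogeneous d)
    {f : K[X][Y]} (hf : equivMvPolynomial K f = dehomogenize F) {v : Fin 3 → K} (hv : v 0 ≠ 0) :
    eval v F = v 0 ^ d * f.evalEval (v 1 / v 0) (v 2 / v 0) := by
  rw [eval_eq_pow_mul_eval_dehomogenize hF hv, evalEval_eq_eval_equivMvPolynomial, hf]
  refine congrArg (fun x => v 0 ^ d * eval x _) (funext fun i => ?_)
  fin_cases i <;> rfl

lemma totalDeg_le_of_equivMvPolynomial_eq_dehomogenize {F : MvPolynomial (Fin 3) K} {d : ℕ}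
    (hF : F.IsHomogeneous d) {f : K[X][Y]} (hf : equivMvPolynomial K f = dehomogenize F) :
    totalDeg f ≤ d := by
  rw [totalDeg, hf]
  exact totalDegree_dehomogenize_le hF

lemma coeff_of_equivMvPolynomial_eq_dehomogenize {F : MvPolynomial (Fin 3) K} {d : ℕ}
    (hF : F.IsHomogeneous d) {f : K[X][Y]} (hf : equivMvPolynomial K f = dehomogenize F) :
    f.coeff d = .C (eval (Pi.single 2 1) F) := by
  ext i
  rw [Polynomial.coeff_C]
  split_ifs with hi
  · subst hi
    have hcons : Finsupp.cons (d - (Finsupp.single (1 : Fin 2) d).degree) (Finsupp.single 1 d) =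
        Finsupp.single (2 : Fin 3) d := by
      ext i
      fin_cases i
      · simp
      · exact (Finsupp.cons_succ 0 _ _).trans (by simp)
      · exact (Finsupp.cons_succ 1 _ _).trans (by simp)
    have := coeff_equivMvPolynomial f (Finsupp.single 1 d)
    rw [hf, coeff_dehomogenize hF, hcons, ← eval_single_of_isHomogeneous hF] at this
    simpa using this.symm
  · exact totalDeg_le_iff.1 (totalDeg_le_of_equivMvPolynomial_eq_dehomogenize hF hf) i d (by omega)

/-- The point masses `μ q` at the points `v q` annihilate all forms of degree `m`. -/
def FormRelation {σ ι : Type*} [Fintype ι] (v : ι → σ → K) (μ : ι → K) (m : ℕ) : Prop :=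
  ∀ F : MvPolynomial σ K, F.IsHomogeneous m → ∑ q, μ q * eval (v q) F = 0

/-- No curve of degree less than `s` passes through all the points `v q`. -/
def NotOnCurveOfDegreeLT {σ ι : Type*} (v : ι → σ → K) (s : ℕ) : Prop :=
  ∀ t < s, ∀ F : MvPolynomial σ K, F.IsHomogeneous t → (∀ q, eval (v q) F = 0) → F = 0

variable {ι : Type*} {v : ι → Fin 3 → K} {μ : ι → K} {m s : ℕ}

lemma eq_zero_of_evalEval_eq_zero (hv : ∀ q, v q 0 ≠ 0)
    (hmin : NotOnCurveOfDegreeLT v s) {f : K[X][Y]} (hf : totalDeg f < s)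
    (hf0 : ∀ q, f.evalEval (v q 1 / v q 0) (v q 2 / v q 0) = 0) : f = 0 := by
  obtain ⟨F, hF, hFf⟩ := exists_isHomogeneous_dehomogenize_eq (le_refl (totalDeg f))
  have hF0 := hmin _ hf F hF fun q => by
    rw [eval_eq_pow_mul_evalEval hF hFf.symm (hv q), hf0, mul_zero]
  rwa [hF0, map_zero, eq_comm, EmbeddingLike.map_eq_zero_iff] at hFf

lemma injective_affine_coordinates (hv : ∀ q, v q 0 ≠ 0)
    (hinj : ∀ p q, ∀ c : K, v p = c • v q → p = q) :
    Function.Injective fun q => (v q 1 / v q 0, v q 2 / v q 0) := by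
  intro p q hpq
  obtain ⟨h₁, h₂⟩ := Prod.ext_iff.1 hpq
  refine hinj p q (v p 0 / v q 0) (funext fun i => ?_)
  fin_cases i
  · exact (div_mul_cancel₀ _ (hv q)).symm
  · exact ((div_eq_iff (hv p)).1 h₁).trans (div_mul_comm _ _ _)
  · exact ((div_eq_iff (hv p)).1 h₂).trans (div_mul_comm _ _ _)

variable [Fintype ι]

lemma FormRelation.affineRelation (h : FormRelation v μ m) (hv : ∀ q, v q 0 ≠ 0) :
    AffineRelation (fun q => v q 1 / v q 0) (fun q => v q 2 / v q 0)
      (fun q => μ q * v q 0 ^ m) m := by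
  intro f hf
  obtain ⟨F, hF, hFf⟩ := exists_isHomogeneous_dehomogenize_eq hf
  rw [← h F hF]
  exact Finset.sum_congr rfl fun q _ => by
    rw [eval_eq_pow_mul_evalEval hF hFf.symm (hv q), mul_assoc]

theorem FormRelation.mul_succ_le_card_of_apply_zero_ne_zero (h : FormRelation v μ m)
    (hμ : ∀ q, μ q ≠ 0) (hv : ∀ q, v q 0 ≠ 0) (hs : 2 * s ≤ m + 2)
    (hmin : NotOnCurveOfDegreeLT v s) : s * (s + 1) ≤ Fintype.card ι :=
  (h.affineRelation hv).mul_succ_le_card (fun q => mul_ne_zero (hμ q) (pow_ne_zero _ (hv q))) hs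
    fun _ => eq_zero_of_evalEval_eq_zero hv hmin

theorem FormRelation.mul_sub_le_card_of_apply_zero_ne_zero [Infinite K] (h : FormRelation v μ m)
    (hμ : ∀ q, μ q ≠ 0) (hv : ∀ q, v q 0 ≠ 0)
    (hinj : ∀ p q, ∀ c : K, v p = c • v q → p = q) (hs : 2 * s ≤ m + 2)
    (hmin : NotOnCurveOfDegreeLT v s)
    {F : MvPolynomial (Fin 3) K} (hF : F.IsHomogeneous s) (hF0 : ∀ q, eval (v q) F = 0)
    (hF2 : eval (Pi.single 2 1) F = 1) : s * (m + 3 - s) ≤ Fintype.card ι := by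
  obtain ⟨f, hf⟩ := (equivMvPolynomial K).surjective (dehomogenize F)
  have hcoeff : f.coeff s = 1 := by
    rw [coeff_of_equivMvPolynomial_eq_dehomogenize hF hf, hF2, Polynomial.C_1]
  have hdeg := totalDeg_le_of_equivMvPolynomial_eq_dehomogenize hF hf
  have hmonic := Polynomial.monic_of_natDegree_le_of_coeff_eq_one s
    ((natDegree_le_totalDeg f).trans hdeg) hcoeff
  obtain rfl : f.natDegree = s := Polynomial.natDegree_eq_of_le_of_coeff_ne_zero
    ((natDegree_le_totalDeg f).trans hdeg) (hcoeff ▸ one_ne_zero)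
  refine (h.affineRelation hv).mul_sub_le_card
    (fun q => mul_ne_zero (hμ q) (pow_ne_zero _ (hv q))) (injective_affine_coordinates hv hinj)
    hmonic hdeg hs (fun _ => eq_zero_of_evalEval_eq_zero hv hmin) fun q => ?_
  have hq := hF0 q
  rw [eval_eq_pow_mul_evalEval hF hf (hv q)] at hq
  exact (mul_eq_zero.1 hq).resolve_left (pow_ne_zero _ (hv q))

end Chart

section CoordinateChange

variable {K σ τ ι : Type*} [Field K] [Finite σ]

lemma exists_isHomogeneous_eval_eq_eval_apply (f : (σ → K) →ₗ[K] (τ → K)) {d : ℕ}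
    {F : MvPolynomial τ K} (hF : F.IsHomogeneous d) :
    ∃ G : MvPolynomial σ K, G.IsHomogeneous d ∧ ∀ v, eval v G = eval (f v) F := by
  classical
  have := Fintype.ofFinite σ
  refine ⟨aeval (LinearMap.toMatrix' f).toMvPolynomial F, ?_, fun v => ?_⟩
  · simpa only [one_mul] using hF.aeval _ (Matrix.toMvPolynomial_isHomogeneous _)
  · have hcomp : (aeval v).comp (aeval (LinearMap.toMatrix' f).toMvPolynomial) = aeval (f v) := by
      ext i
      simp [aeval_eq_eval, Matrix.toMvPolynomial_eval_eq_apply, LinearMap.toMatrix'_mulVec]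
    simpa only [AlgHom.comp_apply, aeval_eq_eval] using DFunLike.congr_fun hcomp F

lemma FormRelation.map [Fintype ι] {v : ι → σ → K} {μ : ι → K} {m : ℕ} (h : FormRelation v μ m)
    (f : (σ → K) →ₗ[K] (τ → K)) : FormRelation (fun q => f (v q)) μ m := by
  intro F hF
  obtain ⟨G, hG, hGF⟩ := exists_isHomogeneous_eval_eq_eval_apply f hF
  simpa only [hGF] using h G hG

lemma NotOnCurveOfDegreeLT.map [Infinite K] {v : ι → σ → K} {s : ℕ}
    (h : NotOnCurveOfDegreeLT v s) (f : (σ → K) ≃ₗ[K] (τ → K)) :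
    NotOnCurveOfDegreeLT (fun q => f (v q)) s := by
  intro t ht F hF hF0
  obtain ⟨G, hG, hGF⟩ := exists_isHomogeneous_eval_eq_eval_apply f.toLinearMap hF
  have hG0 := h t ht G hG fun q => (hGF _).trans (hF0 q)
  refine MvPolynomial.funext fun w => ?_
  simpa [hG0] using (hGF (f.symm w)).symm

lemma exists_linearEquiv_apply_eq {V : Type*} [AddCommGroup V] [Module K V] {p e : V} (hp : p ≠ 0)
    (he : e ≠ 0) : ∃ g : V ≃ₗ[K] V, g p = e := by
  obtain ⟨g, hg⟩ := Submodule.exists_linearEquiv_restrict_eq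
    (LinearEquiv.coord K V p hp ≪≫ₗ LinearEquiv.toSpanNonzeroSingleton K V e he)
  refine ⟨g, ?_⟩
  simpa [LinearEquiv.coord_self] using (hg ⟨p, Submodule.mem_span_singleton_self p⟩).symm

lemma exists_forall_add_mul_ne_zero [Infinite K] [Finite ι] {a b : ι → K}
    (h : ∀ q, a q = 0 → b q ≠ 0) : ∃ c, ∀ q, a q + c * b q ≠ 0 := by
  obtain ⟨c, hc⟩ := (Set.finite_range fun q => -a q / b q).exists_notMem
  refine ⟨c, fun q hq => ?_⟩
  rcases eq_or_ne (b q) 0 with hb | hb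
  · exact h q (by simpa [hb] using hq) hb
  · exact hc ⟨q, by field_simp; linear_combination -hq⟩

lemma exists_linearEquiv_apply_zero_ne_zero [Infinite K] [Finite ι] {v : ι → Fin 3 → K}
    {p : Fin 3 → K} (hp : p ≠ 0) (hv : ∀ q, v q ∉ Submodule.span K {p}) :
    ∃ f : (Fin 3 → K) ≃ₗ[K] (Fin 3 → K), f p = Pi.single 2 1 ∧ ∀ q, f (v q) 0 ≠ 0 := by
  obtain ⟨g, hg⟩ := exists_linearEquiv_apply_eq (K := K) hp
    (Pi.single_ne_zero_iff.2 one_ne_zero : (Pi.single 2 1 : Fin 3 → K) ≠ 0)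
  obtain ⟨c, hc⟩ := exists_forall_add_mul_ne_zero (a := fun q => g (v q) 0)
    (b := fun q => g (v q) 1) fun q h0 h1 => by
      refine hv q (Submodule.mem_span_singleton.2 ⟨g (v q) 2, g.injective (funext fun i => ?_)⟩)
      fin_cases i <;> simp_all
  let ℓ : Module.Dual K (Fin 3 → K) := c • LinearMap.proj 1
  have hshear : ℓ (Pi.single 0 1) = 0 := by simp [ℓ]
  refine ⟨g ≪≫ₗ LinearEquiv.transvection hshear, ?_, fun q => ?_⟩
  · simp [ℓ, hg, LinearMap.transvection.apply]
  · simpa [ℓ, LinearMap.transvection.apply] using hc q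

end CoordinateChange

section ProjectivePlane

variable {K ι : Type*} [Field K]

lemma exists_isHomogeneous_one_eval_eq_zero {σ : Type*} [Nontrivial σ] (v : σ → K) :
    ∃ F : MvPolynomial σ K, F ≠ 0 ∧ F.IsHomogeneous 1 ∧ eval v F = 0 := by
  classical
  obtain ⟨i, j, hij⟩ := exists_pair_ne σ
  by_cases hi : v i = 0
  · exact ⟨X i, X_ne_zero i, isHomogeneous_X K i, by rwa [eval_X]⟩
  · refine ⟨C (v i) * X j - C (v j) * X i, fun h => hi ?_,
      (isHomogeneous_C_mul_X _ _).sub (isHomogeneous_C_mul_X _ _), by simp [mul_comm]⟩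
    simpa [hij] using congrArg (eval (Pi.single j 1)) h

lemma exists_isHomogeneous_eval_eq_zero [Finite ι] {σ : Type*} [Nontrivial σ] (v : ι → σ → K) :
    ∃ s, ∃ F : MvPolynomial σ K, F ≠ 0 ∧ F.IsHomogeneous s ∧ ∀ q, eval (v q) F = 0 := by
  have := Fintype.ofFinite ι
  choose F hF0 hF hFv using fun q => exists_isHomogeneous_one_eval_eq_zero (v q)
  refine ⟨_, ∏ q, F q, Finset.prod_ne_zero_iff.2 fun q _ => hF0 q,
    .prod _ _ _ fun q _ => hF q, fun q => ?_⟩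
  rw [map_prod]
  exact Finset.prod_eq_zero (Finset.mem_univ q) (hFv q)

lemma exists_ne_zero_eval_ne_zero [Infinite K] {σ : Type*} [Nonempty σ] {F : MvPolynomial σ K}
    (hF : F ≠ 0) : ∃ p ≠ 0, eval p F ≠ 0 := by
  obtain ⟨i⟩ := ‹Nonempty σ›
  have hFX : F * X i ≠ 0 := mul_ne_zero hF (X_ne_zero i)
  contrapose! hFX
  refine MvPolynomial.funext fun p => ?_
  rcases eq_or_ne p 0 with rfl | hp
  · simp
  · simp [hFX p hp]

lemma exists_chart [Infinite K] [Finite ι] {v : ι → Fin 3 → K} (hv : ∀ q, v q ≠ 0) {s : ℕ}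
    {F : MvPolynomial (Fin 3) K} (hF0 : F ≠ 0) (hF : F.IsHomogeneous s)
    (hFv : ∀ q, eval (v q) F = 0) :
    ∃ f : (Fin 3 → K) ≃ₗ[K] (Fin 3 → K), (∀ q, f (v q) 0 ≠ 0) ∧
      ∃ G : MvPolynomial (Fin 3) K, G.IsHomogeneous s ∧ eval (Pi.single 2 1) G = 1 ∧
        ∀ q, eval (f (v q)) G = 0 := by
  obtain ⟨p, hp, hFp⟩ := exists_ne_zero_eval_ne_zero hF0
  have hspan (q) : v q ∉ Submodule.span K {p} := by
    rw [Submodule.mem_span_singleton]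
    rintro ⟨c, hc⟩
    have hcs : c ^ s = 0 := by
      simpa [← hc, eval_smul_of_isHomogeneous hF, hFp] using hFv q
    exact hv q (by rw [← hc, eq_zero_of_pow_eq_zero hcs, zero_smul])
  obtain ⟨f, hfp, hfv⟩ := exists_linearEquiv_apply_zero_ne_zero hp hspan
  obtain ⟨G, hG, hGF⟩ := exists_isHomogeneous_eval_eq_eval_apply f.symm.toLinearMap hF
  refine ⟨f, hfv, C (eval p F)⁻¹ * G, hG.C_mul _, ?_, fun q => ?_⟩
  · simp [hGF, ← hfp, hFp]
  · simp [hGF, hFv]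

variable [Fintype ι] {v : ι → Fin 3 → K} {μ : ι → K} {m s : ℕ}

theorem FormRelation.mul_succ_le_card [Infinite K] (h : FormRelation v μ m) (hμ : ∀ q, μ q ≠ 0)
    (hv : ∀ q, v q ≠ 0) (hs : 2 * s ≤ m + 2) (hmin : NotOnCurveOfDegreeLT v s) :
    s * (s + 1) ≤ Fintype.card ι := by
  obtain ⟨d, F, hF0, hF, hFv⟩ := exists_isHomogeneous_eval_eq_zero v
  obtain ⟨f, hfv, -⟩ := exists_chart hv hF0 hF hFv
  exact (h.map f.toLinearMap).mul_succ_le_card_of_apply_zero_ne_zero hμ hfv hs (hmin.map f)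

theorem FormRelation.mul_sub_le_card [Infinite K] (h : FormRelation v μ m) (hμ : ∀ q, μ q ≠ 0)
    (hv : ∀ q, v q ≠ 0) (hinj : ∀ p q, ∀ c : K, v p = c • v q → p = q) (hs : 2 * s ≤ m + 2)
    (hmin : NotOnCurveOfDegreeLT v s) {F : MvPolynomial (Fin 3) K} (hF0 : F ≠ 0)
    (hF : F.IsHomogeneous s) (hFv : ∀ q, eval (v q) F = 0) :
    s * (m + 3 - s) ≤ Fintype.card ι := by
  obtain ⟨f, hfv, G, hG, hG2, hGv⟩ := exists_chart hv hF0 hF hFv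
  refine (h.map f.toLinearMap).mul_sub_le_card_of_apply_zero_ne_zero hμ hfv (fun p q c hpq => ?_)
    hs (hmin.map f) hG hGv hG2
  exact hinj p q c (f.injective (by simpa using hpq))

theorem FormRelation.mul_succ_le_card_or_exists [Infinite K] [Nonempty ι] (h : FormRelation v μ m)
    (hμ : ∀ q, μ q ≠ 0) (hv : ∀ q, v q ≠ 0) (hinj : ∀ p q, ∀ c : K, v p = c • v q → p = q)
    {r : ℕ} (hr : 2 * r ≤ m + 2) :
    r * (r + 1) ≤ Fintype.card ι ∨
      ∃ s, 1 ≤ s ∧ s < r ∧ s * (m + 3 - s) ≤ Fintype.card ι ∧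
        ∃ F : MvPolynomial (Fin 3) K, F ≠ 0 ∧ F.IsHomogeneous s ∧ ∀ q, eval (v q) F = 0 := by
  classical
  have hex := exists_isHomogeneous_eval_eq_zero v
  obtain ⟨F, hF0, hF, hFv⟩ := Nat.find_spec hex
  have hmin : NotOnCurveOfDegreeLT v (Nat.find hex) := fun t ht G hG hGv =>
    of_not_not fun hG0 => Nat.find_min hex ht ⟨G, hG0, hG, hGv⟩
  rcases le_or_gt r (Nat.find hex) with hrs | hsr
  · exact .inl (h.mul_succ_le_card hμ hv hr fun t ht => hmin t (ht.trans_le hrs))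
  refine .inr ⟨_, Nat.one_le_iff_ne_zero.2 fun h0 => hF0 ?_, hsr,
    h.mul_sub_le_card hμ hv hinj (by omega) hmin hF0 hF hFv, F, hF0, hF, hFv⟩
  obtain ⟨q⟩ := ‹Nonempty ι›
  have hconst := totalDegree_eq_zero_iff_eq_C.1 (Nat.le_zero.1 (h0 ▸ hF.totalDegree_le))
  have hq := hFv q
  rw [hconst, eval_C] at hq
  rw [hconst, hq, C_0]

lemma FormRelation.restrict_support {σ : Type*} {v : ι → σ → K} [Fintype {q // μ q ≠ 0}]
    (h : FormRelation v μ m) :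
    FormRelation (fun q : {q // μ q ≠ 0} => v q) (fun q => μ q) m := by
  intro F hF
  refine (Fintype.sum_of_injective _ Subtype.val_injective _ _ (fun q hq => ?_) fun _ => rfl).trans
    (h F hF)
  have hq0 : μ q = 0 := by simpa using hq
  rw [hq0, zero_mul]

lemma exists_formRelation_of_eval_eq_zero {σ : Type*} {v : ι → σ → K} {P : ι}
    (h : ∀ F : MvPolynomial σ K, F.IsHomogeneous m → (∀ q, q ≠ P → eval (v q) F = 0) →
      eval (v P) F = 0) : ∃ μ, μ P ≠ 0 ∧ FormRelation v μ m := by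
  classical
  let ev (q : ι) : homogeneousSubmodule σ K m →ₗ[K] K :=
    (aeval (v q)).toLinearMap ∘ₗ (homogeneousSubmodule σ K m).subtype
  have hmem : ev P ∈ Submodule.span K (Set.range fun q : {q // q ≠ P} => ev q) := by
    refine mem_span_of_iInf_ker_le_ker fun F hF => h F F.2 fun q hq => ?_
    exact (Submodule.mem_iInf _).1 hF ⟨q, hq⟩
  obtain ⟨c, hc⟩ := (Submodule.mem_span_range_iff_exists_fun K).1 hmem
  refine ⟨fun q => if hq : q = P then -1 else c ⟨q, hq⟩, by simp, fun F hF => ?_⟩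
  have hcF : ∑ q, c q * eval (v q) F = eval (v P) F := by
    simpa [ev, aeval_eq_eval] using DFunLike.congr_fun hc ⟨F, hF⟩
  rw [Fintype.sum_eq_add_sum_subtype_ne _ P, ← hcF]
  simp [fun q : {q // q ≠ P} => q.2]

end ProjectivePlane

theorem stmt_11_general {K : Type*} [Field K] [Infinite K] {m r : ℕ} (hm : 2 * r ≤ m + 2)
    {S : Set (Projectivization K (Fin 3 → K))} (hfin : S.Finite) (hcard : S.ncard < r * (r + 1))
    (hcurve : ∀ s, 1 ≤ s → s < r → ∀ F : MvPolynomial (Fin 3) K, F ≠ 0 → F.IsHomogeneous s →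
      (S ∩ {Q | eval Q.rep F = 0}).ncard < s * (m + 3 - s)) :
    ∀ P ∈ S, ∃ F : MvPolynomial (Fin 3) K, F.IsHomogeneous m ∧
      (∀ Q ∈ S, Q ≠ P → eval Q.rep F = 0) ∧ eval P.rep F ≠ 0 := by
  classical
  intro P hP
  by_contra! hP0
  have := hfin.fintype
  obtain ⟨μ, hμP, hμ⟩ := exists_formRelation_of_eval_eq_zero (v := fun Q : S => Q.1.rep)
    (P := ⟨P, hP⟩) fun F hF hF0 => hP0 F hF fun Q hQ hQP => hF0 ⟨Q, hQ⟩ (by simpa using hQP)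
  have : Nonempty {Q // μ Q ≠ 0} := ⟨⟨P, hP⟩, hμP⟩
  have hcard_le {T : Set (Projectivization K (Fin 3 → K))} (hTS : T ⊆ S)
      (hT : ∀ Q : {Q // μ Q ≠ 0}, Q.1.1 ∈ T) : Fintype.card {Q // μ Q ≠ 0} ≤ T.ncard := by
    rw [← Nat.card_eq_fintype_card, ← Set.ncard_range_of_injective
      (Subtype.val_injective.comp Subtype.val_injective)]
    exact Set.ncard_le_ncard (Set.range_subset_iff.2 hT) (hfin.subset hTS)
  have hinj (P Q : {Q // μ Q ≠ 0}) (c : K) (hc : P.1.1.rep = c • Q.1.1.rep) : P = Q := by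
    refine Subtype.ext (Subtype.ext ?_)
    rw [← P.1.1.mk_rep, ← Q.1.1.mk_rep, Projectivization.mk_eq_mk_iff']
    exact ⟨c, hc.symm⟩
  rcases hμ.restrict_support.mul_succ_le_card_or_exists (fun Q => Q.2) (fun Q => Q.1.1.rep_nonzero)
    hinj hm with hr | ⟨s, hs, hsr, hsm, F, hF0, hF, hFv⟩
  · exact (hr.trans (hcard_le subset_rfl fun Q => Q.1.2)).not_gt hcard
  · exact (hsm.trans (hcard_le Set.inter_subset_left fun Q => ⟨Q.1.2, hFv Q⟩)).not_gt
      (hcurve s hs hsr F hF0 hF)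

theorem stmt_11 (n r : ℕ) (hr : 3 ≤ r) (hn : 2 ≤ n) (hrn : n ≤ 2 * r)
    (S : Set (ProjPt 2)) (hfin : S.Finite)
    (hcard : 4 * S.ncard ≤ (2 * r + n - 2) * r)
    (hcurve : ∀ t : ℕ, 1 ≤ t →
      ∀ C : MvPolynomial (Fin 3) ℂ, C ≠ 0 → C.IsHomogeneous t →
        (S ∩ {p : ProjPt 2 | VanishesAt C p}).ncard ≤ t * (2 * r + n - 2)) :
    ∀ P ∈ S, ∃ F : MvPolynomial (Fin 3) ℂ,
      F.IsHomogeneous (3 * r + n - 5) ∧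
      (∀ Q ∈ S, Q ≠ P → VanishesAt F Q) ∧ ¬ VanishesAt F P :=
  stmt_11_general (r := r) (by omega) hfin
    (by nlinarith [Nat.mul_le_mul_right r (show 2 * r + n - 2 ≤ 4 * r by omega)])
    fun s hs hsr C hC hCs => (hcurve s hs C hC hCs).trans_lt
      (Nat.mul_lt_mul_of_pos_left (by omega) hs)
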